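/- If a compact metric space X is the union of countably many closed subsets X_i, i = 1, 2, …, then for every abelian group A, dim_A X = sup_i dim_A X_i. -/

import Mathlib

open Set Function

open scoped ENNReal

noncomputable section

/-! ### Alexander–Spanier (Čech) cohomology -/

namespace AS

variable (A : Type*) [AddCommGroup A]

/-- Alexander–Spanier `n`-cochains on `X` with coefficients in `A`. -/
abbrev Cochain (X : Type*) (n : ℕ) : Type _ := (Fin (n + 1) → X) → A

/-- The Alexander–Spanier coboundary operator. -/
def d (X : Type*) (n : ℕ) : Cochain A X n →+ Cochain A X (n + 1) :=
  AddMonoidHom.mk' (fun φ s => ∑ i : Fin (n + 2), ((-1 : ℤ) ^ (i : ℕ)) • φ (s ∘ i.succAbove))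
    (fun φ ψ => funext fun s => by
      simp [smul_add, Finset.sum_add_distrib])

/-- An open cover of `X`. -/
def IsOpenCover {X : Type*} [TopologicalSpace X] (U : Set (Set X)) : Prop :=
  (∀ u ∈ U, IsOpen u) ∧ ⋃₀ U = univ

/-- A tuple is `U`-small if it is contained in a single member of `U`. -/
def Small {X : Type*} (U : Set (Set X)) {k : ℕ} (s : Fin k → X) : Prop :=
  ∃ u ∈ U, ∀ i, s i ∈ u

/-- The subgroup of cochains vanishing on all tuples that are small with respect to
some open cover (i.e. vanishing in a neighbourhood of the diagonal). -/
def locZero (X : Type*) [TopologicalSpace X] (n : ℕ) : AddSubgroup (Cochain A X n) where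
  carrier := {φ | ∃ U, IsOpenCover U ∧ ∀ s : Fin (n + 1) → X, Small U s → φ s = 0}
  zero_mem' := ⟨{univ}, ⟨fun u hu => by rw [mem_singleton_iff] at hu; rw [hu]; exact isOpen_univ,
      by simp⟩, fun s _ => rfl⟩
  add_mem' := by
    rintro φ ψ ⟨U, ⟨hUo, hUc⟩, hφ⟩ ⟨W, ⟨hWo, hWc⟩, hψ⟩
    refine ⟨(fun p : Set X × Set X => p.1 ∩ p.2) '' (U ×ˢ W), ⟨?_, ?_⟩, ?_⟩
    · rintro _ ⟨⟨u, w⟩, ⟨hu, hw⟩, rfl⟩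
      exact (hUo u hu).inter (hWo w hw)
    · apply eq_univ_of_forall
      intro x
      have hx1 : x ∈ ⋃₀ U := hUc ▸ mem_univ x
      have hx2 : x ∈ ⋃₀ W := hWc ▸ mem_univ x
      obtain ⟨u, hu, hxu⟩ := hx1
      obtain ⟨w, hw, hxw⟩ := hx2
      exact ⟨u ∩ w, ⟨⟨u, w⟩, ⟨hu, hw⟩, rfl⟩, hxu, hxw⟩
    · rintro s ⟨_, ⟨⟨u, w⟩, ⟨hu, hw⟩, rfl⟩, hs⟩
      have h1 : φ s = 0 := hφ s ⟨u, hu, fun i => (hs i).1⟩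
      have h2 : ψ s = 0 := hψ s ⟨w, hw, fun i => (hs i).2⟩
      show φ s + ψ s = 0
      rw [h1, h2, add_zero]
  neg_mem' := by
    rintro φ ⟨U, hU, hφ⟩
    exact ⟨U, hU, fun s hs => by show -φ s = 0; rw [hφ s hs, neg_zero]⟩

/-- The Alexander–Spanier cochain complex: cochains modulo locally zero cochains. -/
abbrev QC (X : Type*) [TopologicalSpace X] (n : ℕ) : Type _ := Cochain A X n ⧸ locZero A X n

lemma d_locZero (X : Type*) [TopologicalSpace X] (n : ℕ) :
    locZero A X n ≤ (locZero A X (n + 1)).comap (d A X n) := by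
  rintro φ ⟨U, hU, hφ⟩
  refine ⟨U, hU, fun s ⟨u, hu, hs⟩ => ?_⟩
  show (d A X n φ) s = 0
  have : ∀ i : Fin (n + 2), φ (s ∘ i.succAbove) = 0 :=
    fun i => hφ _ ⟨u, hu, fun j => hs _⟩
  simp only [d, AddMonoidHom.mk'_apply]
  exact Finset.sum_eq_zero fun i _ => by rw [this i, smul_zero]

/-- The induced differential on the Alexander–Spanier complex. -/
def dQ (X : Type*) [TopologicalSpace X] (n : ℕ) : QC A X n →+ QC A X (n + 1) :=
  QuotientAddGroup.map _ _ (d A X n) (d_locZero A X n)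

/-- Cocycles. -/
def cocycles (X : Type*) [TopologicalSpace X] (n : ℕ) : AddSubgroup (QC A X n) :=
  (dQ A X n).ker

/-- Coboundaries (the trivial subgroup in degree `0`). -/
def cobounds (X : Type*) [TopologicalSpace X] (n : ℕ) : AddSubgroup (QC A X n) :=
  match n with
  | 0 => ⊥
  | (m + 1) => (dQ A X m).range

/-- Alexander–Spanier cohomology of `X` with coefficients in `A`; for paracompact Hausdorff
(e.g. metric) spaces this is naturally isomorphic to Čech cohomology. -/
def ASH (n : ℕ) (X : Type*) [TopologicalSpace X] : Type _ :=
  ↥(cocycles A X n) ⧸ ((cobounds A X n).comap (cocycles A X n).subtype)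

instance (n : ℕ) (X : Type*) [TopologicalSpace X] : AddCommGroup (ASH A n X) :=
  inferInstanceAs (AddCommGroup
    (↥(cocycles A X n) ⧸ ((cobounds A X n).comap (cocycles A X n).subtype)))

end AS

namespace AS

variable (A : Type*) [AddCommGroup A]

/-- Pullback of Alexander–Spanier cochains along a map. -/
def pull {X Y : Type*} (f : X → Y) (n : ℕ) : Cochain A Y n →+ Cochain A X n :=
  AddMonoidHom.mk' (fun φ s => φ (f ∘ s)) (fun φ ψ => rfl)

lemma pull_d {X Y : Type*} (f : X → Y) (n : ℕ) (φ : Cochain A Y n) :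
    pull A f (n + 1) (d A Y n φ) = d A X n (pull A f n φ) := rfl

lemma pull_locZero {X Y : Type*} [TopologicalSpace X] [TopologicalSpace Y] {f : X → Y}
    (hf : Continuous f) (n : ℕ) :
    locZero A Y n ≤ (locZero A X n).comap (pull A f n) := by
  rintro φ ⟨U, ⟨hUo, hUc⟩, hφ⟩
  refine ⟨(f ⁻¹' ·) '' U, ⟨?_, ?_⟩, ?_⟩
  · rintro _ ⟨u, hu, rfl⟩
    exact (hUo u hu).preimage hf
  · apply eq_univ_of_forall
    intro x
    have : f x ∈ ⋃₀ U := hUc ▸ mem_univ _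
    obtain ⟨u, hu, hx⟩ := this
    exact ⟨f ⁻¹' u, ⟨u, hu, rfl⟩, hx⟩
  · rintro s ⟨_, ⟨u, hu, rfl⟩, hs⟩
    exact hφ _ ⟨u, hu, fun i => hs i⟩

/-- Pullback on the Alexander–Spanier complex. -/
def pullQ {X Y : Type*} [TopologicalSpace X] [TopologicalSpace Y] {f : X → Y}
    (hf : Continuous f) (n : ℕ) : QC A Y n →+ QC A X n :=
  QuotientAddGroup.map _ _ (pull A f n) (pull_locZero A hf n)

lemma pullQ_d {X Y : Type*} [TopologicalSpace X] [TopologicalSpace Y] {f : X → Y}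
    (hf : Continuous f) (n : ℕ) (x : QC A Y n) :
    pullQ A hf (n + 1) (dQ A Y n x) = dQ A X n (pullQ A hf n x) := by
  refine QuotientAddGroup.induction_on x ?_
  intro φ
  simp only [pullQ, dQ, QuotientAddGroup.map_mk, pull_d]

lemma pullQ_cocycles {X Y : Type*} [TopologicalSpace X] [TopologicalSpace Y] {f : X → Y}
    (hf : Continuous f) (n : ℕ) {x : QC A Y n} (hx : x ∈ cocycles A Y n) :
    pullQ A hf n x ∈ cocycles A X n := by
  have : dQ A Y n x = 0 := hx
  show dQ A X n (pullQ A hf n x) = 0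
  rw [← pullQ_d, this, map_zero]

lemma pullQ_cobounds {X Y : Type*} [TopologicalSpace X] [TopologicalSpace Y] {f : X → Y}
    (hf : Continuous f) (n : ℕ) {x : QC A Y n} (hx : x ∈ cobounds A Y n) :
    pullQ A hf n x ∈ cobounds A X n := by
  match n with
  | 0 =>
    have : x = 0 := hx
    rw [this, map_zero]
    exact (⊥ : AddSubgroup (QC A X 0)).zero_mem
  | (m + 1) =>
    obtain ⟨y, rfl⟩ := hx
    exact ⟨pullQ A hf m y, (pullQ_d A hf m y).symm⟩

/-- The map on cocycles induced by a continuous map. -/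
def pullZ {X Y : Type*} [TopologicalSpace X] [TopologicalSpace Y] {f : X → Y}
    (hf : Continuous f) (n : ℕ) : ↥(cocycles A Y n) →+ ↥(cocycles A X n) :=
  AddMonoidHom.codRestrict ((pullQ A hf n).comp (cocycles A Y n).subtype) _
    (fun x => pullQ_cocycles A hf n x.2)

/-- The homomorphism induced on Alexander–Spanier (Čech) cohomology by a continuous map.
Note the contravariance: a map `f : X → Y` induces `ASHmap : ASH A n Y →+ ASH A n X`. -/
def ASHmap {X Y : Type*} [TopologicalSpace X] [TopologicalSpace Y] {f : X → Y}
    (hf : Continuous f) (n : ℕ) : ASH A n Y →+ ASH A n X :=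
  QuotientAddGroup.map _ _ (pullZ A hf n) (by
    rintro ⟨x, hx⟩ hmem
    have : x ∈ cobounds A Y n := hmem
    exact pullQ_cobounds A hf n this)

end AS

namespace AS

variable (A : Type*) [AddCommGroup A]

/-- Čech cohomology with compact supports: for compact `B` this is the (Alexander–Spanier =
Čech) cohomology of `B` itself, and for noncompact `B` it is that of the one-point
compactification of `B`. -/
def Hc (n : ℕ) (B : Type*) [TopologicalSpace B] : Type _ :=
  open scoped Classical in
  if CompactSpace B then ASH A n B else ASH A n (OnePoint B)

end AS

/-- The cohomological dimension `dim_A X` of a space `X` with respect to an abelian group `A`: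
the supremum of the integers `n` for which there is a locally compact subset `B ⊆ X` with
`H^n_c(B; A) ≠ 0`. -/
noncomputable def cohDim (A : Type*) [AddCommGroup A] (X : Type*) [TopologicalSpace X] : ℕ∞ :=
  sSup {e : ℕ∞ | ∃ n : ℕ, e = (n : ℕ∞) ∧
    ∃ B : Set X, LocallyCompactSpace B ∧ Nontrivial (AS.Hc A n B)}

namespace AS

open scoped Topology
open Filter

section Combinatorics

variable {A : Type*} [AddCommGroup A] {X : Type*}

/-- Evaluation of a cochain on tuples starting with the vertex `x`. -/
def cone (x : X) {n : ℕ} (φ : Cochain A X (n + 1)) : Cochain A X n :=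
  fun s => φ (Fin.cons x s : Fin (n + 2) → X)

lemma cons_comp_succ_succAbove {n : ℕ} (x : X) (s : Fin (n + 1) → X) (i : Fin (n + 1)) :
    (Fin.cons x s : Fin (n + 2) → X) ∘ i.succ.succAbove
      = (Fin.cons x (s ∘ i.succAbove) : Fin (n + 1) → X) := by
  funext j
  refine Fin.cases ?_ (fun j => ?_) j
  · simp
  · simp

lemma d_cons {n : ℕ} (φ : Cochain A X (n + 1)) (x : X) (s : Fin (n + 2) → X) :
    d A X (n + 1) φ (Fin.cons x s : Fin (n + 3) → X) = φ s - d A X n (cone x φ) s := by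
  simp only [d, AddMonoidHom.mk'_apply]
  rw [Fin.sum_univ_succ]
  have h0 : (Fin.cons x s : Fin (n + 3) → X) ∘ (0 : Fin (n + 3)).succAbove = s := by
    funext j; simp
  rw [h0, sub_eq_add_neg, ← Finset.sum_neg_distrib]
  congr 1
  · simp
  · refine Finset.sum_congr rfl fun i _ => ?_
    rw [cons_comp_succ_succAbove]
    simp [cone, pow_succ]

lemma d_zero_cons (φ : Cochain A X 0) (x : X) (s : Fin 1 → X) :
    d A X 0 φ (Fin.cons x s : Fin 2 → X) = φ s - φ (fun _ => x) := by
  simp only [d, AddMonoidHom.mk'_apply]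
  rw [Fin.sum_univ_two]
  have h0 : (Fin.cons x s : Fin 2 → X) ∘ (0 : Fin 2).succAbove = s := by
    funext j; simp
  have h1 : (Fin.cons x s : Fin 2 → X) ∘ (1 : Fin 2).succAbove = fun _ => x := by
    funext j; fin_cases j; rfl
  rw [h0, h1]
  simp [sub_eq_add_neg]

lemma cone_d {n : ℕ} (φ : Cochain A X (n + 1)) (x : X) :
    cone x (d A X (n + 1) φ) = φ - d A X n (cone x φ) :=
  funext fun s => d_cons φ x s

lemma d_d : ∀ {n : ℕ} (φ : Cochain A X n), d A X (n + 1) (d A X n φ) = 0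
  | 0, φ => by
    funext s
    rw [← Fin.cons_self_tail s, d_cons]
    have : cone (s 0) (d A X 0 φ) = φ - fun _ => φ (fun _ => s 0) :=
      funext fun t => d_zero_cons φ (s 0) t
    rw [this, map_sub]
    have hc : d A X 0 (fun _ => φ (fun _ => s 0)) = 0 := by
      funext t
      simp [d, Fin.sum_univ_two]
    rw [hc]
    simp
  | n + 1, φ => by
    funext s
    rw [← Fin.cons_self_tail s, d_cons, cone_d, map_sub, d_d]
    simp

/-- The prism operator between the identity and a self-map `r`. -/
def prism (r : X → X) : ∀ {n : ℕ}, Cochain A X (n + 1) → Cochain A X n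
  | 0, φ => fun s => φ (Fin.cons (s 0) (r ∘ s) : Fin 2 → X)
  | n + 1, φ => fun s =>
      φ (Fin.cons (s 0) (r ∘ s) : Fin (n + 3) → X) - prism r (cone (s 0) φ) (Fin.tail s)

lemma prism_sub (r : X → X) : ∀ {n : ℕ} (φ ψ : Cochain A X (n + 1)),
    prism r (φ - ψ) = prism r φ - prism r ψ
  | 0, _, _ => rfl
  | n + 1, φ, ψ => by
    funext s
    have h : cone (s 0) (φ - ψ) = cone (s 0) φ - cone (s 0) ψ := rfl
    simp only [prism, h, prism_sub r, Pi.sub_apply]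
    abel

lemma comp_cons {n : ℕ} (r : X → X) (x : X) (s : Fin n → X) :
    r ∘ (Fin.cons x s : Fin (n + 1) → X) = Fin.cons (r x) (r ∘ s) := by
  funext j
  refine Fin.cases ?_ (fun j => ?_) j <;> simp

lemma d_prism (r : X → X) : ∀ {n : ℕ} (φ : Cochain A X (n + 1)),
    d A X n (prism r φ) + prism r (d A X (n + 1) φ) = pull A r (n + 1) φ - φ := by
  intro n
  induction n with
  | zero =>
    intro φ
    funext s
    obtain ⟨x, t, rfl⟩ : ∃ x t, s = (Fin.cons x t : Fin 2 → X) :=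
      ⟨s 0, Fin.tail s, (Fin.cons_self_tail s).symm⟩
    have e : (fun i : Fin 1 => r x) = r ∘ fun _ : Fin 1 => x := rfl
    simp only [Pi.add_apply, Pi.sub_apply, prism, d_zero_cons, Fin.cons_zero, Fin.tail_cons,
      comp_cons, d_cons, cone, pull, AddMonoidHom.mk'_apply]
    simp only [← e]
    have h1 : ∀ u : Fin 1 → X, (fun _ : Fin 1 => u 0) = u := fun u => by
      funext i; fin_cases i; rfl
    rw [h1 t]
    abel
  | succ n ih =>
    intro φ
    funext s
    obtain ⟨x, t, rfl⟩ : ∃ x t, s = (Fin.cons x t : Fin (n + 3) → X) :=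
      ⟨s 0, Fin.tail s, (Fin.cons_self_tail s).symm⟩
    have hc : cone x (prism r φ)
        = pull A r n (cone (r x) (cone x φ)) - prism r (cone x φ) := by
      funext u
      simp [cone, prism, pull, comp_cons]
    have hi := congrFun (ih (cone x φ)) t
    simp only [Pi.add_apply, Pi.sub_apply] at hi
    have hp : prism r (d A X (n + 2) φ) (Fin.cons x t : Fin (n + 3) → X)
        = φ (r ∘ (Fin.cons x t : Fin (n + 3) → X)) -
          (cone x φ (r ∘ t) - d A X n (cone (r x) (cone x φ)) (r ∘ t))
          - (prism r φ t - prism r (d A X (n + 1) (cone x φ)) t) := by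
      have h1 : prism r (d A X (n + 2) φ) (Fin.cons x t : Fin (n + 3) → X)
          = d A X (n + 2) φ (Fin.cons x (Fin.cons (r x) (r ∘ t) : Fin (n + 3) → X))
            - prism r (cone x (d A X (n + 2) φ)) t := by
        simp [prism, comp_cons]
      rw [h1, d_cons, cone_d, prism_sub, Pi.sub_apply, d_cons, comp_cons]
    rw [Pi.add_apply, d_cons, hc, map_sub, ← pull_d, hp]
    simp only [Pi.sub_apply, pull, AddMonoidHom.mk'_apply] at hi ⊢
    have hx : cone x φ t = φ (Fin.cons x t : Fin (n + 3) → X) := rfl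
    rw [hx] at hi
    rw [← sub_eq_zero] at hi ⊢
    rw [← hi]
    abel

lemma prism_eq_zero (r : X → X) (U V : Set X) (hUV : U ⊆ V) (hr : ∀ x ∈ U, r x ∈ V) :
    ∀ {n : ℕ} (φ : Cochain A X (n + 1)), (∀ s, (∀ i, s i ∈ V) → φ s = 0) →
      ∀ s, (∀ i, s i ∈ U) → prism r φ s = 0 := by
  have hcons : ∀ {n : ℕ} (x : X) (t : Fin n → X), x ∈ V → (∀ i, t i ∈ V) →
      ∀ i, (Fin.cons x t : Fin (n + 1) → X) i ∈ V := fun x t hx ht i => by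
    refine Fin.cases ?_ (fun j => ?_) i
    · simpa using hx
    · simpa using ht j
  intro n
  induction n with
  | zero =>
    intro φ hφ s hs
    exact hφ _ (hcons _ _ (hUV (hs 0)) fun i => hr _ (hs i))
  | succ n ih =>
    intro φ hφ s hs
    have h1 := hφ _ (hcons (s 0) (r ∘ s) (hUV (hs 0)) fun i => hr _ (hs i))
    have h2 := ih (cone (s 0) φ) (fun t ht => hφ _ (hcons _ _ (hUV (hs 0)) ht)) (Fin.tail s)
      fun i => hs _
    show _ - _ = _
    rw [h1, h2, sub_zero]

end Combinatorics

section Germs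

variable {A : Type*} [AddCommGroup A] {X Y : Type*} [TopologicalSpace X] [TopologicalSpace Y]

/-- A cochain vanishes on all tuples contained in some neighbourhood of `x`. -/
def VanishAt {n : ℕ} (φ : Cochain A X n) (x : X) : Prop :=
  ∃ U ∈ 𝓝 x, ∀ s : Fin (n + 1) → X, (∀ i, s i ∈ U) → φ s = 0

lemma mem_locZero_iff {n : ℕ} {φ : Cochain A X n} :
    φ ∈ locZero A X n ↔ ∀ x, VanishAt φ x := by
  constructor
  · rintro ⟨U, ⟨hUo, hUc⟩, h⟩ x
    obtain ⟨u, hu, hx⟩ : x ∈ ⋃₀ U := hUc ▸ mem_univ x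
    exact ⟨u, (hUo u hu).mem_nhds hx, fun s hs => h s ⟨u, hu, hs⟩⟩
  · intro h
    refine ⟨{u | IsOpen u ∧ ∀ s : Fin (n + 1) → X, (∀ i, s i ∈ u) → φ s = 0},
      ⟨fun u hu => hu.1, eq_univ_of_forall fun x => ?_⟩, fun s ⟨u, hu, hs⟩ => hu.2 s hs⟩
    obtain ⟨U, hU, hz⟩ := h x
    obtain ⟨V, hVU, hVo, hx⟩ := mem_nhds_iff.1 hU
    exact ⟨V, ⟨hVo, fun s hs => hz s fun i => hVU (hs i)⟩, hx⟩

namespace VanishAt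

variable {n : ℕ} {φ ψ : Cochain A X n} {x : X}

lemma congr_on {U : Set X} (hφ : VanishAt φ x) (hU : U ∈ 𝓝 x)
    (h : ∀ s : Fin (n + 1) → X, (∀ i, s i ∈ U) → ψ s = φ s) : VanishAt ψ x := by
  obtain ⟨V, hV, hz⟩ := hφ
  exact ⟨U ∩ V, inter_mem hU hV, fun s hs => by
    rw [h s fun i => (hs i).1, hz s fun i => (hs i).2]⟩

lemma add (hφ : VanishAt φ x) (hψ : VanishAt ψ x) : VanishAt (φ + ψ) x := by
  obtain ⟨U, hU, hz⟩ := hφ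
  exact hψ.congr_on hU fun s hs => by rw [Pi.add_apply, hz s hs, zero_add]

lemma neg (hφ : VanishAt φ x) : VanishAt (-φ) x := by
  obtain ⟨U, hU, hz⟩ := hφ
  exact ⟨U, hU, fun s hs => by rw [Pi.neg_apply, hz s hs, neg_zero]⟩

lemma sub (hφ : VanishAt φ x) (hψ : VanishAt ψ x) : VanishAt (φ - ψ) x := by
  rw [sub_eq_add_neg]
  exact hφ.add hψ.neg

lemma d (hφ : VanishAt φ x) : VanishAt (AS.d A X n φ) x := by
  obtain ⟨U, hU, hz⟩ := hφ
  refine ⟨U, hU, fun s hs => ?_⟩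
  simp only [AS.d, AddMonoidHom.mk'_apply]
  exact Finset.sum_eq_zero fun i _ => by rw [hz (s ∘ i.succAbove) fun j => hs _, smul_zero]

lemma pull {f : Y → X} {y : Y} (hφ : VanishAt φ (f y)) (hf : ContinuousAt f y) :
    VanishAt (AS.pull A f n φ) y := by
  obtain ⟨U, hU, hz⟩ := hφ
  exact ⟨f ⁻¹' U, hf hU, fun s hs => hz _ hs⟩

lemma prism {φ : Cochain A X (n + 1)} {r : X → X} (hφ : VanishAt φ x)
    (hr : ContinuousAt r x) (hx : r x = x) : VanishAt (AS.prism r φ) x := by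
  obtain ⟨U, hU, hz⟩ := hφ
  have hU' : r ⁻¹' U ∈ 𝓝 x := hr (by rwa [hx])
  exact ⟨r ⁻¹' U ∩ U, inter_mem hU' hU,
    prism_eq_zero r _ U (fun y hy => hy.2) (fun y hy => hy.1) φ hz⟩

lemma cone {φ : Cochain A X (n + 1)} (hφ : VanishAt φ x) : VanishAt (AS.cone x φ) x := by
  obtain ⟨U, hU, hz⟩ := hφ
  refine ⟨U, hU, fun s hs => hz _ fun i => ?_⟩
  refine Fin.cases ?_ (fun j => ?_) i
  · simpa using mem_of_mem_nhds hU
  · simpa using hs j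

end VanishAt

lemma isOpen_vanishAt {n : ℕ} (φ : Cochain A X n) : IsOpen {x | VanishAt φ x} := by
  rw [isOpen_iff_mem_nhds]
  rintro x ⟨U, hU, hz⟩
  filter_upwards [eventually_mem_nhds_iff.2 hU] with y hy
  exact ⟨U, hy, hz⟩

/-- A cochain that is closed near `p` may be changed, without changing its coboundary, to one
vanishing near `p`. -/
lemma exists_vanishAt_of_d {n : ℕ} {φ : Cochain A X n} {p : X}
    (h : VanishAt (d A X n φ) p) : ∃ φ', d A X n φ' = d A X n φ ∧ VanishAt φ' p := by
  refine ⟨cone p (d A X n φ), ?_, h.cone⟩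
  have := cone_d (d A X n φ) p
  rw [d_d] at this
  exact (sub_eq_zero.1 this.symm).symm

lemma not_nontrivial_ASH_iff {n : ℕ} : ¬ Nontrivial (ASH A (n + 1) X) ↔
    ∀ ψ : Cochain A X (n + 1), (∀ x, VanishAt (d A X (n + 1) ψ) x) →
      ∃ χ : Cochain A X n, ∀ x, VanishAt (ψ - d A X n χ) x := by
  have key : ∀ (ψ : Cochain A X (n + 1)) (χ : Cochain A X n),
      dQ A X n (QuotientAddGroup.mk χ) = QuotientAddGroup.mk ψ ↔
        ∀ x, VanishAt (ψ - d A X n χ) x := by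
    intro ψ χ
    rw [← mem_locZero_iff, sub_eq_neg_add, ← QuotientAddGroup.eq]
    rfl
  have hcoc : ∀ ψ : Cochain A X (n + 1), (QuotientAddGroup.mk ψ : QC A X (n + 1)) ∈
      cocycles A X (n + 1) ↔ ∀ x, VanishAt (d A X (n + 1) ψ) x := by
    intro ψ
    rw [← mem_locZero_iff]
    exact QuotientAddGroup.eq_zero_iff (d A X (n + 1) ψ)
  rw [not_nontrivial_iff_subsingleton]
  constructor
  · intro hs ψ hψ
    have h0 : (QuotientAddGroup.mk ⟨QuotientAddGroup.mk ψ, (hcoc ψ).2 hψ⟩ : ASH A (n + 1) X) =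
        QuotientAddGroup.mk 0 := hs.elim _ _
    have h1 := (QuotientAddGroup.eq_zero_iff _).1 h0
    obtain ⟨y, hy⟩ : ∃ y, dQ A X n y = QuotientAddGroup.mk ψ := h1
    obtain ⟨χ, rfl⟩ := QuotientAddGroup.mk_surjective y
    exact ⟨χ, (key ψ χ).1 hy⟩
  · intro h
    have h0 : ∀ c : ASH A (n + 1) X, c = QuotientAddGroup.mk 0 := by
      intro c
      obtain ⟨⟨z, hz⟩, rfl⟩ := QuotientAddGroup.mk_surjective c
      obtain ⟨ψ, rfl⟩ := QuotientAddGroup.mk_surjective z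
      obtain ⟨χ, hχ⟩ := h ψ ((hcoc ψ).1 hz)
      refine (QuotientAddGroup.eq_zero_iff _).2 ?_
      exact ⟨QuotientAddGroup.mk χ, (key ψ χ).2 hχ⟩
    exact ⟨fun a b => (h0 a).trans (h0 b).symm⟩

lemma nontrivial_ASH_of_homeomorph {n : ℕ} (e : X ≃ₜ Y) (h : Nontrivial (ASH A (n + 1) X)) :
    Nontrivial (ASH A (n + 1) Y) := by
  by_contra hY
  refine not_nontrivial_ASH_iff.2 (fun ψ hψ => ?_) h
  obtain ⟨χ, hχ⟩ := not_nontrivial_ASH_iff.1 hY (pull A e.symm (n + 1) ψ) fun y => by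
    rw [← pull_d]
    exact (hψ _).pull e.symm.continuous.continuousAt
  refine ⟨pull A e n χ, fun x => ?_⟩
  have h1 := (hχ (e x)).pull e.continuous.continuousAt
  have h2 : ψ = pull A e (n + 1) (pull A e.symm (n + 1) ψ) := by
    funext s
    have : e.symm ∘ e ∘ s = s := by funext i; simp
    simp [pull, this]
  rw [map_sub, pull_d, ← h2] at h1
  exact h1

lemma nontrivial_Hc_of_homeomorph {n : ℕ} (e : X ≃ₜ Y) (h : Nontrivial (Hc A (n + 1) X)) :
    Nontrivial (Hc A (n + 1) Y) := by
  unfold Hc at h ⊢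
  by_cases hX : CompactSpace X
  · have hY : CompactSpace Y := e.compactSpace
    rw [if_pos hX] at h
    rw [if_pos hY]
    exact nontrivial_ASH_of_homeomorph e h
  · have hY : ¬ CompactSpace Y := fun hY => hX e.symm.compactSpace
    rw [if_neg hX] at h
    rw [if_neg hY]
    exact nontrivial_ASH_of_homeomorph e.onePointCongr h

end Germs

end AS

namespace AS

open scoped Topology
open Filter TopologicalSpace

section CompactMetrizable

variable {A : Type*} [AddCommGroup A] {K : Type*} [TopologicalSpace K]

/-- A closed subset of a compact metrizable space is the image of a retraction which is
continuous at the points of the subset. -/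
lemma exists_retraction [CompactSpace K] [MetrizableSpace K] {F : Set K} (hF : IsClosed F)
    (hne : F.Nonempty) :
    ∃ r : K → K, (∀ x, r x ∈ F) ∧ (∀ x ∈ F, r x = x) ∧ ∀ x ∈ F, ContinuousAt r x := by
  let _ := metrizableSpaceMetric K
  choose r hrF hr using fun x => hF.isCompact.exists_infDist_eq_dist hne x
  have hfix : ∀ x ∈ F, r x = x := fun x hx => by
    have := hr x
    rw [Metric.infDist_zero_of_mem hx] at this
    exact (dist_eq_zero.1 this.symm).symm
  refine ⟨r, hrF, hfix, fun x hx => ?_⟩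
  rw [Metric.continuousAt_iff]
  intro ε hε
  refine ⟨ε / 2, by positivity, fun {y} hy => ?_⟩
  have h1 : dist y (r y) ≤ dist y x := hr y ▸ Metric.infDist_le_dist_of_mem hx
  rw [hfix x hx]
  calc dist (r y) x ≤ dist (r y) y + dist y x := dist_triangle _ _ _
    _ < ε := by rw [dist_comm (r y)]; linarith

/-- A cochain vanishing near `C ∩ F` may be cut off to vanish near `C`, keeping its germ
along `F`. -/
lemma exists_cutoff [NormalSpace K] {n : ℕ} {C F : Set K} (hC : IsClosed C) (hF : IsClosed F)
    (χ : Cochain A K n) (h : ∀ x ∈ C ∩ F, VanishAt χ x) :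
    ∃ χ' : Cochain A K n, (∀ x ∈ C, VanishAt χ' x) ∧ ∀ x ∈ F, VanishAt (χ' - χ) x := by
  classical
  obtain ⟨V, hVo, hCV, hV⟩ := normal_exists_closure_subset hC
    (hF.sdiff (isOpen_vanishAt χ)).isOpen_compl (fun x hx hx' => hx'.2 (h x ⟨hx, hx'.1⟩))
  refine ⟨fun s => if ∀ i, s i ∈ V then 0 else χ s, fun x hx => ?_, fun x hx => ?_⟩
  · exact ⟨V, hVo.mem_nhds (hCV hx), fun s hs => if_pos hs⟩
  · by_cases hxV : x ∈ closure V
    · have hz : VanishAt χ x := by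
        by_contra hz
        exact hV hxV ⟨hx, hz⟩
      obtain ⟨U, hU, hz⟩ := hz
      exact ⟨U, hU, fun s hs => by simp [hz s hs]⟩
    · refine ⟨(closure V)ᶜ, isClosed_closure.isOpen_compl.mem_nhds hxV, fun s hs => ?_⟩
      have : ¬ ∀ i, s i ∈ V := fun h => hs 0 (subset_closure (h 0))
      simp [this]

/-- A cochain vanishing near `D` has the same germs as one vanishing on all tuples contained in
a neighbourhood of `D`. -/
lemma exists_vanish_on_nhd [NormalSpace K] {n : ℕ} {D : Set K} (hD : IsClosed D)
    (ψ : Cochain A K n) (h : ∀ x ∈ D, VanishAt ψ x) :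
    ∃ (ψ' : Cochain A K n) (N : Set K), IsOpen N ∧ D ⊆ N ∧
      (∀ s : Fin (n + 1) → K, (∀ i, s i ∈ N) → ψ' s = 0) ∧ ∀ x, VanishAt (ψ - ψ') x := by
  classical
  obtain ⟨V, hVo, hDV, hV⟩ := normal_exists_closure_subset hD (isOpen_vanishAt ψ) h
  refine ⟨fun s => if ∀ i, s i ∈ V then 0 else ψ s, V, hVo, hDV, fun s hs => if_pos hs,
    fun x => ?_⟩
  by_cases hxV : x ∈ closure V
  · obtain ⟨U, hU, hz⟩ := hV hxV
    exact ⟨U, hU, fun s hs => by simp [hz s hs]⟩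
  · refine ⟨(closure V)ᶜ, isClosed_closure.isOpen_compl.mem_nhds hxV, fun s hs => ?_⟩
    have : ¬ ∀ i, s i ∈ V := fun h => hs 0 (subset_closure (h 0))
    simp [this]

lemma vanishAt_sub_d_sub_prism {n : ℕ} {ψ : Cochain A K (n + 1)} {χ : Cochain A K n}
    {r : K → K} {x : K} (h : VanishAt (pull A r (n + 1) ψ - d A K n χ) x)
    (hψ : VanishAt (d A K (n + 1) ψ) x) (hr : ContinuousAt r x) (hx : r x = x) :
    VanishAt (ψ - d A K n (χ - prism r ψ)) x := by
  have e : ψ - d A K n (χ - prism r ψ)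
      = (pull A r (n + 1) ψ - d A K n χ) - prism r (d A K (n + 1) ψ) := by
    rw [map_sub, eq_sub_of_add_eq (d_prism r ψ)]
    abel
  rw [e]
  exact h.sub (hψ.prism hr hx)

/-- A closed subset with vanishing cohomology has vanishing germ cohomology. -/
lemma exists_primitive_of_ASH [CompactSpace K] [MetrizableSpace K] {n : ℕ} {G : Set K}
    (hG : IsClosed G) (h : ¬ Nontrivial (ASH A (n + 1) G)) (ψ : Cochain A K (n + 1))
    (hψ : ∀ x ∈ G, VanishAt (d A K (n + 1) ψ) x) :
    ∃ χ : Cochain A K n, ∀ x ∈ G, VanishAt (ψ - d A K n χ) x := by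
  rcases G.eq_empty_or_nonempty with rfl | hne
  · exact ⟨0, fun x hx => hx.elim⟩
  obtain ⟨r, hrG, hfix, hrc⟩ := exists_retraction hG hne
  obtain ⟨χ, hχ⟩ := not_nontrivial_ASH_iff.1 h (pull A Subtype.val (n + 1) ψ) fun x => by
    rw [← pull_d]
    exact (hψ x x.2).pull continuous_subtype_val.continuousAt
  let p : K → G := fun x => ⟨r x, hrG x⟩
  have hp : ∀ x ∈ G, ContinuousAt p x := fun x hx =>
    Topology.IsInducing.subtypeVal.continuousAt_iff.2 (hrc x hx)
  refine ⟨pull A p n χ - prism r ψ, fun x hx => ?_⟩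
  refine vanishAt_sub_d_sub_prism ?_ (hψ x hx) (hrc x hx) (hfix x hx)
  have := (hχ (p x)).pull (hp x hx)
  rwa [map_sub, pull_d] at this

/-- Vanishing of compactly supported cohomology of `F \ D` gives vanishing of the germ
cohomology of the pair `(F, D)`. -/
lemma exists_relative_primitive [CompactSpace K] [MetrizableSpace K] {n : ℕ} {F D : Set K}
    (hF : IsClosed F) (hD : IsClosed D) (hDF : D ⊆ F)
    (h : ¬ Nontrivial (Hc A (n + 1) ↥(F \ D))) (ψ : Cochain A K (n + 1))
    (hψ : ∀ x ∈ F, VanishAt (d A K (n + 1) ψ) x) (hψD : ∀ x ∈ D, VanishAt ψ x) :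
    ∃ χ : Cochain A K n, (∀ x ∈ D, VanishAt χ x) ∧ ∀ x ∈ F, VanishAt (ψ - d A K n χ) x := by
  classical
  unfold Hc at h
  by_cases hc : CompactSpace ↥(F \ D)
  · rw [if_pos hc] at h
    have hG : IsClosed (F \ D) := (isCompact_iff_compactSpace.2 hc).isClosed
    obtain ⟨χ, hχ⟩ := exists_primitive_of_ASH hG h ψ fun x hx => hψ x hx.1
    obtain ⟨χ', hχD, hχ'⟩ := exists_cutoff hD hG χ fun x hx => (hx.2.2 hx.1).elim
    refine ⟨χ', hχD, fun x hx => ?_⟩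
    by_cases hxD : x ∈ D
    · exact (hψD x hxD).sub (hχD x hxD).d
    · have e : ψ - d A K n χ' = (ψ - d A K n χ) - d A K n (χ' - χ) := by
        rw [map_sub]
        abel
      rw [e]
      exact (hχ x ⟨hx, hxD⟩).sub (hχ' x ⟨hx, hxD⟩).d
  rw [if_neg hc] at h
  have hDne : D.Nonempty := by
    by_contra hne
    rw [not_nonempty_iff_eq_empty] at hne
    subst hne
    rw [sdiff_empty] at hc
    exact hc (isCompact_iff_compactSpace.1 hF.isCompact)
  obtain ⟨d₀, hd₀⟩ := hDne
  obtain ⟨r, hrF, hfix, hrc⟩ := exists_retraction hF ⟨d₀, hDF hd₀⟩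
  obtain ⟨ψ₁, N, hNo, hDN, hψN, hψψ⟩ := exists_vanish_on_nhd hD ψ hψD
  have hψ₁D : ∀ x ∈ D, VanishAt ψ₁ x := fun x hx => ⟨N, hNo.mem_nhds (hDN hx), hψN⟩
  have hdψ₁ : ∀ x ∈ F, VanishAt (d A K (n + 1) ψ₁) x := fun x hx => by
    have := (hψ x hx).sub (hψψ x).d
    rwa [map_sub, sub_sub_cancel] at this
  let j : OnePoint ↥(F \ D) → K := fun q => q.elim d₀ Subtype.val
  let p : K → OnePoint ↥(F \ D) := fun x =>
    if hx : r x ∈ D then OnePoint.infty else ((⟨r x, hrF x, hx⟩ : ↥(F \ D)) : OnePoint ↥(F \ D))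
  have hpD : ∀ x, r x ∈ D → p x = OnePoint.infty := fun x hx => dif_pos hx
  have hpF : ∀ x (hx : r x ∉ D), p x = ((⟨r x, hrF x, hx⟩ : ↥(F \ D)) : OnePoint ↥(F \ D)) :=
    fun x hx => dif_neg hx
  have hjp : ∀ x, r x ∉ D → j (p x) = r x := fun x hx => by rw [hpF x hx]; rfl
  have hjp' : ∀ x, r x ∈ D → j (p x) = d₀ := fun x hx => by rw [hpD x hx]; rfl
  have hp : ∀ x ∈ F, ContinuousAt p x := by
    intro x hx V hV
    change p ⁻¹' V ∈ 𝓝 x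
    by_cases hxD : x ∈ D
    · rw [hpD x (by rwa [hfix x hx])] at hV
      obtain ⟨C, ⟨hCc, hCk⟩, hCV⟩ := OnePoint.hasBasis_nhds_infty.mem_iff.1 hV
      have hCk' : IsClosed (Subtype.val '' C) := (hCk.image continuous_subtype_val).isClosed
      have hxC : r x ∉ Subtype.val '' C := by
        rintro ⟨c, -, hcx⟩
        rw [hfix x hx] at hcx
        exact c.2.2 (hcx ▸ hxD)
      filter_upwards [hrc x hx (hCk'.isOpen_compl.mem_nhds hxC)] with y hy
      refine hCV ?_
      by_cases hyD : r y ∈ D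
      · exact Or.inr (hpD y hyD)
      · refine Or.inl ⟨_, fun hyC => hy ⟨_, hyC, rfl⟩, (hpF y hyD).symm⟩
    · have hrD : r x ∉ D := by rwa [hfix x hx]
      rw [hpF x hrD] at hV
      have hV' := OnePoint.continuous_coe.continuousAt hV
      obtain ⟨W, hW, hWV⟩ := mem_nhds_subtype _ _ _ |>.1 hV'
      filter_upwards [hrc x hx hW, hrc x hx (hD.isOpen_compl.mem_nhds hrD)] with y hyW hyD
      show p y ∈ V
      rw [hpF y hyD]
      exact hWV (show (⟨r y, hrF y, hyD⟩ : ↥(F \ D)) ∈ Subtype.val ⁻¹' W from hyW)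
  have hj_inf : VanishAt (pull A j (n + 1) ψ₁) OnePoint.infty := by
    refine ⟨j ⁻¹' N, ?_, fun s hs => hψN _ hs⟩
    refine OnePoint.hasBasis_nhds_infty.mem_iff.2 ⟨Subtype.val ⁻¹' Nᶜ,
      ⟨hNo.isClosed_compl.preimage continuous_subtype_val, ?_⟩, ?_⟩
    · rw [Subtype.isCompact_iff]
      have : (Subtype.val '' (Subtype.val ⁻¹' Nᶜ : Set ↥(F \ D))) = F ∩ Nᶜ := by
        ext y
        simp only [Subtype.image_preimage_coe, mem_inter_iff, Set.mem_sdiff, mem_compl_iff]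
        exact ⟨fun hy => ⟨hy.1.1, hy.2⟩, fun hy => ⟨⟨hy.1, fun hyD => hy.2 (hDN hyD)⟩, hy.2⟩⟩
      rw [this]
      exact (hF.inter hNo.isClosed_compl).isCompact
    · rintro _ (⟨y, hy, rfl⟩ | rfl)
      · exact not_not.1 hy
      · exact hDN hd₀
  obtain ⟨χ₁, hχ₁⟩ := not_nontrivial_ASH_iff.1 h (pull A j (n + 1) ψ₁) fun q => by
    induction q with
    | infty => exact hj_inf.d
    | coe y =>
      rw [← pull_d]
      refine VanishAt.pull (f := j) (y := (y : OnePoint ↥(F \ D))) (hdψ₁ y y.2.1)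
        (OnePoint.continuousAt_coe.2 ?_)
      exact continuous_subtype_val.continuousAt
  obtain ⟨χ₂, hdχ, hχ₂⟩ := exists_vanishAt_of_d (φ := χ₁) (p := OnePoint.infty) (by
    have := hj_inf.sub (hχ₁ OnePoint.infty)
    rwa [sub_sub_cancel] at this)
  refine ⟨pull A p n χ₂ - prism r ψ₁, fun x hx => ?_, fun x hx => ?_⟩
  · have hxF := hDF hx
    refine VanishAt.sub ?_ ((hψ₁D x hx).prism (hrc x hxF) (hfix x hxF))
    exact VanishAt.pull (by rwa [hpD x (by rwa [hfix x hxF])]) (hp x hxF)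
  · have e : ψ - d A K n (pull A p n χ₂ - prism r ψ₁)
        = (ψ - ψ₁) + (ψ₁ - d A K n (pull A p n χ₂ - prism r ψ₁)) := by abel
    rw [e]
    refine (hψψ x).add (vanishAt_sub_d_sub_prism ?_ (hdψ₁ x hx) (hrc x hx) (hfix x hx))
    have h1 := (hχ₁ (p x)).pull (hp x hx)
    rw [map_sub, ← hdχ, pull_d] at h1
    have h2 : VanishAt (pull A r (n + 1) ψ₁ - pull A p (n + 1) (pull A j (n + 1) ψ₁)) x := by
      by_cases hxD : x ∈ D
      · have hrN : r x ∈ N := by rw [hfix x hx]; exact hDN hxD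
        refine ⟨r ⁻¹' N, hrc x hx (hNo.mem_nhds hrN), fun s hs => ?_⟩
        have h3 : ψ₁ (r ∘ s) = 0 := hψN _ hs
        have h4 : ψ₁ (j ∘ p ∘ s) = 0 := hψN _ fun i => by
          by_cases hi : r (s i) ∈ D
          · rw [comp_apply, comp_apply, hjp' _ hi]
            exact hDN hd₀
          · rw [comp_apply, comp_apply, hjp _ hi]
            exact hs i
        show ψ₁ (r ∘ s) - ψ₁ (j ∘ p ∘ s) = 0
        rw [h3, h4, sub_zero]
      · have hrD : r x ∉ D := by rwa [hfix x hx]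
        refine ⟨r ⁻¹' Dᶜ, hrc x hx (hD.isOpen_compl.mem_nhds hrD), fun s hs => ?_⟩
        have h3 : j ∘ p ∘ s = r ∘ s := funext fun i => hjp _ (hs i)
        show ψ₁ (r ∘ s) - ψ₁ (j ∘ p ∘ s) = 0
        rw [h3, sub_self]
    have := h2.add h1
    rwa [sub_add_sub_cancel] at this

/-- A cocycle which is a coboundary near `C₀` is a coboundary, provided that the space is a
countable union of closed sets `F i` such that the relative cohomology of `F i` modulo its
closed subsets containing `C₀ ∩ F i` vanishes. -/
lemma exists_primitive_of_iUnion [CompactSpace K] [MetrizableSpace K] {n : ℕ} {F : ℕ → Set K}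
    (hF : ∀ i, IsClosed (F i)) (hU : ⋃ i, F i = univ) {C₀ : Set K} (hC₀ : IsClosed C₀)
    (h : ∀ i D, IsClosed D → D ⊆ F i → C₀ ∩ F i ⊆ D →
      ¬ Nontrivial (Hc A (n + 1) ↥(F i \ D)))
    (α : Cochain A K (n + 1)) (hα : ∀ x, VanishAt (d A K (n + 1) α) x)
    (h₀ : ∃ β : Cochain A K n, ∀ x ∈ C₀, VanishAt (α - d A K n β) x) :
    ∃ β : Cochain A K n, ∀ x, VanishAt (α - d A K n β) x := by
  let P : Set K → Prop := fun C => IsClosed C ∧ C₀ ⊆ C ∧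
    ∃ β : Cochain A K n, ∀ x ∈ C, VanishAt (α - d A K n β) x
  have step : ∀ (i : ℕ) (C : Subtype P), ∃ C' : Subtype P, C.1 ∪ F i ⊆ interior C'.1 := by
    rintro i ⟨C, hC, hC₀C, β, hβ⟩
    obtain ⟨χ, hχD, hχ⟩ := exists_relative_primitive (hF i) (hC.inter (hF i)) inter_subset_right
      (h i _ (hC.inter (hF i)) inter_subset_right (inter_subset_inter_left _ hC₀C))
      (α - d A K n β) (fun x _ => by rw [map_sub, d_d, sub_zero]; exact hα x)
      (fun x hx => hβ x hx.1)
    obtain ⟨χ', hχC, hχF⟩ := exists_cutoff hC (hF i) χ hχD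
    have hz : ∀ x ∈ C ∪ F i, VanishAt (α - d A K n (β + χ')) x := by
      rintro x (hx | hx)
      · have := (hβ x hx).sub (hχC x hx).d
        rwa [sub_sub, ← map_add] at this
      · have := (hχ x hx).sub (hχF x hx).d
        have e : α - d A K n (β + χ') = α - d A K n β - d A K n χ - d A K n (χ' - χ) := by
          rw [map_sub, map_add]
          abel
        rwa [e]
    obtain ⟨V, hVo, hV, hVc⟩ := normal_exists_closure_subset (hC.union (hF i))
      (isOpen_vanishAt _) hz
    exact ⟨⟨closure V, isClosed_closure,
      hC₀C.trans (subset_union_left.trans (hV.trans subset_closure)), β + χ', hVc⟩,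
      hV.trans (hVo.subset_interior_closure)⟩
  choose next hnext using step
  let C : ℕ → Subtype P := fun k => Nat.rec ⟨C₀, hC₀, subset_rfl, h₀⟩ next k
  have hstep : ∀ k, (C k).1 ∪ F k ⊆ interior (C (k + 1)).1 := fun k => hnext k (C k)
  have hmono : Monotone fun k => interior (C k).1 := monotone_nat_of_le_succ fun k =>
    interior_subset.trans (subset_union_left.trans (hstep k))
  obtain ⟨k, hk⟩ := isCompact_univ.elim_directed_cover (fun k => interior (C k).1)
    (fun k => isOpen_interior) (fun x _ => by
      obtain ⟨i, hi⟩ := mem_iUnion.1 (hU ▸ mem_univ x : x ∈ ⋃ i, F i)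
      exact mem_iUnion.2 ⟨i + 1, hstep i (Or.inr hi)⟩) hmono.directed_le
  obtain ⟨β, hβ⟩ := (C k).2.2.2
  exact ⟨β, fun x => hβ x (interior_subset (hk (mem_univ x)))⟩

end CompactMetrizable

lemma secondCountableTopology_onePoint (Y : Type*) [TopologicalSpace Y] [T2Space Y]
    [LocallyCompactSpace Y] [SecondCountableTopology Y] :
    SecondCountableTopology (OnePoint Y) := by
  let E : CompactExhaustion Y := default
  have hopen : ∀ k, IsOpen ((OnePoint.some '' (E k))ᶜ : Set (OnePoint Y)) := fun k =>
    OnePoint.isOpen_compl_image_coe.2 ⟨(E.isCompact k).isClosed, E.isCompact k⟩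
  have hb : IsTopologicalBasis ((fun s => (OnePoint.some '' s : Set (OnePoint Y))) ''
      countableBasis Y ∪ range fun k => ((OnePoint.some '' (E k))ᶜ : Set (OnePoint Y))) := by
    refine isTopologicalBasis_of_isOpen_of_nhds ?_ ?_
    · rintro _ (⟨s, hs, rfl⟩ | ⟨k, rfl⟩)
      · exact OnePoint.isOpen_image_coe.2 (isOpen_of_mem_countableBasis hs)
      · exact hopen k
    · intro q V hq hV
      induction q with
      | infty =>
        obtain ⟨C, ⟨-, hC⟩, hCV⟩ :=
          OnePoint.hasBasis_nhds_infty.mem_iff.1 (hV.mem_nhds hq)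
        obtain ⟨k, hk⟩ := E.exists_superset_of_isCompact hC
        refine ⟨_, Or.inr ⟨k, rfl⟩, OnePoint.infty_notMem_image_coe, ?_⟩
        refine Subset.trans ?_ hCV
        dsimp only
        rw [OnePoint.compl_image_coe]
        exact union_subset_union_left _ (image_mono (compl_subset_compl.2 hk))
      | coe y =>
        obtain ⟨s, hs, hys, hsV⟩ := (isBasis_countableBasis Y).exists_subset_of_mem_open
          (show y ∈ OnePoint.some ⁻¹' V from hq) (hV.preimage OnePoint.continuous_coe)
        exact ⟨_, Or.inl ⟨s, hs, rfl⟩, ⟨y, hys, rfl⟩, image_subset_iff.2 hsV⟩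
  exact hb.secondCountableTopology
    (((countable_countableBasis Y).image _).union (countable_range _))

end AS

namespace AS

open Topology TopologicalSpace

lemma cohDim_le_of_isEmbedding {A : Type*} [AddCommGroup A] {X Y : Type*} [TopologicalSpace X]
    [TopologicalSpace Y] {f : Y → X} (hf : IsEmbedding f) : cohDim A Y ≤ cohDim A X := by
  refine sSup_le ?_
  rintro _ ⟨n, rfl, B, hB, hn⟩
  cases n with
  | zero => simp
  | succ n =>
    let e := hf.homeomorphImage B
    exact le_sSup ⟨n + 1, rfl, f '' B, e.symm.isClosedEmbedding.locallyCompactSpace,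
      nontrivial_Hc_of_homeomorph e hn⟩

lemma le_cohDim_of_isEmbedding {A : Type*} [AddCommGroup A] {X Y : Type*} [TopologicalSpace X]
    [TopologicalSpace Y] [LocallyCompactSpace Y] {f : Y → X} (hf : IsEmbedding f) {n : ℕ}
    (h : Nontrivial (Hc A (n + 1) Y)) : ((n + 1 : ℕ) : ℕ∞) ≤ cohDim A X := by
  let e := hf.toHomeomorph
  exact le_sSup ⟨n + 1, rfl, range f, e.symm.isClosedEmbedding.locallyCompactSpace,
    nontrivial_Hc_of_homeomorph e h⟩

lemma not_nontrivial_Hc_of_iUnion {A : Type*} [AddCommGroup A] {B : Type*} [TopologicalSpace B]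
    [MetrizableSpace B] [SecondCountableTopology B] [LocallyCompactSpace B] {n : ℕ}
    {F : ℕ → Set B} (hF : ∀ i, IsClosed (F i)) (hU : ⋃ i, F i = univ)
    (h : ∀ i, ∀ S ⊆ F i, LocallyCompactSpace S → ¬ Nontrivial (Hc A (n + 1) S)) :
    ¬ Nontrivial (Hc A (n + 1) B) := by
  unfold Hc
  by_cases hB : CompactSpace B
  · rw [if_pos hB]
    refine not_nontrivial_ASH_iff.2 fun ψ hψ => exists_primitive_of_iUnion hF hU isClosed_empty
      (fun i D hD hDF _ => h i _ sdiff_subset ?_) ψ hψ ⟨0, fun x hx => hx.elim⟩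
    exact ((hF i).isLocallyClosed.inter hD.isOpen_compl.isLocallyClosed).locallyCompactSpace
  · rw [if_neg hB]
    have := secondCountableTopology_onePoint B
    let F' : ℕ → Set (OnePoint B) := fun i => (OnePoint.some '' (F i)ᶜ)ᶜ
    have hF' : ∀ i, IsClosed (F' i) := fun i =>
      (OnePoint.isOpen_image_coe.2 (hF i).isOpen_compl).isClosed_compl
    have hU' : ⋃ i, F' i = univ := by
      refine eq_univ_of_forall fun q => mem_iUnion.2 ?_
      induction q with
      | infty => exact ⟨0, OnePoint.infty_notMem_image_coe⟩
      | coe b =>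
        obtain ⟨i, hi⟩ := mem_iUnion.1 (hU ▸ mem_univ b : b ∈ ⋃ i, F i)
        refine ⟨i, ?_⟩
        rintro ⟨c, hc, hcb⟩
        exact hc (OnePoint.coe_injective hcb ▸ hi)
    refine not_nontrivial_ASH_iff.2 fun ψ hψ => exists_primitive_of_iUnion hF' hU'
      OnePoint.isClosed_infty (fun i D hD hDF hiD hn => ?_) ψ hψ ?_
    · let S : Set B := OnePoint.some ⁻¹' (F' i \ D)
      have hS : OnePoint.some '' S = F' i \ D := by
        refine image_preimage_eq_of_subset fun q hq => ?_
        induction q with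
        | infty => exact (hq.2 (hiD ⟨rfl, hq.1⟩)).elim
        | coe b => exact ⟨b, rfl⟩
      let e : S ≃ₜ ↥(F' i \ D) :=
        (OnePoint.isOpenEmbedding_coe.isEmbedding.homeomorphImage S).trans (.setCongr hS)
      have : LocallyCompactSpace ↥(F' i \ D) :=
        ((hF' i).isLocallyClosed.inter hD.isOpen_compl.isLocallyClosed).locallyCompactSpace
      refine h i S (fun b hb => ?_) e.isClosedEmbedding.locallyCompactSpace
        (nontrivial_Hc_of_homeomorph e.symm hn)
      by_contra hbF
      exact hb.1 ⟨b, hbF, rfl⟩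
    · refine ⟨cone OnePoint.infty ψ, ?_⟩
      rintro _ rfl
      rw [← cone_d]
      exact (hψ _).cone

end AS

/-- **Theorem 11** (Countable union theorem).  If a compact metric space `X` is the union of
countably many closed subsets `X_i`, then `dim_A X = sup_i dim_A X_i` for every abelian
group `A`. -/
theorem cohDim_countable_union (X : Type) [MetricSpace X] [CompactSpace X]
    (A : Type*) [AddCommGroup A] (Xi : ℕ → Set X)
    (hclosed : ∀ i, IsClosed (Xi i)) (hunion : (⋃ i, Xi i) = Set.univ) :
    cohDim A X = ⨆ i, cohDim A (Xi i) := by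
  refine le_antisymm (sSup_le ?_)
    (iSup_le fun i => AS.cohDim_le_of_isEmbedding Topology.IsEmbedding.subtypeVal)
  rintro _ ⟨m, rfl, B, hB, hm⟩
  cases m with
  | zero => simp
  | succ n =>
    by_contra hlt
    refine AS.not_nontrivial_Hc_of_iUnion (F := fun i => (Subtype.val ⁻¹' Xi i : Set B))
      (fun i => (hclosed i).preimage continuous_subtype_val)
      (by rw [← preimage_iUnion, hunion, preimage_univ]) (fun i S hS hSc hn => hlt ?_) hm
    have hf : Topology.IsEmbedding fun x : S => (⟨x.1.1, hS x.2⟩ : Xi i) :=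
      (Topology.IsEmbedding.subtypeVal.comp Topology.IsEmbedding.subtypeVal).codRestrict _ _
    exact (AS.le_cohDim_of_isEmbedding hf hn).trans (le_iSup (fun i => cohDim A (Xi i)) i)
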